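/- Let (M,E,η) be a factorable monoid satisfying the stronger conditions η′(x·s) = η′(η′(x)·s) and η̄(x·s) = η̄(x)·η̄(η′(x)·s) for all x ∈ M and s ∈ E. Then f₁f₂f₁f₂ = f₂f₁f₂ = f₂f₁f₂f₁ as maps M³ → M³ (honest equality, not merely in the graded sense). Moreover, for words I, J ∈ F_n with I ∼_Q J and any tuple (x_{n+1},…,x_1) ∈ E^{n+1} of generators, f_I(x_{n+1},…,x_1) = f_J(x_{n+1},…,x_1), where for I = (i_s,…,i_1) one sets f_I = f_{i_s}∘⋯∘f_{i_1} : M^{n+1} → M^{n+1}. -/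

import Mathlib

/-- The word length of `m` with respect to the generating set `E`:
the least `n` such that `m` is a product of `n` elements of `E`. -/
noncomputable def wordLength {M : Type*} [Monoid M] (E : Set M) (m : M) : ℕ :=
  sInf {n | ∃ l : List M, (∀ x ∈ l, x ∈ E) ∧ l.length = n ∧ l.prod = m}

/-- `E` is a generating set of the monoid `M`. -/
def IsGenSet {M : Type*} [Monoid M] (E : Set M) : Prop :=
  ∀ m : M, ∃ l : List M, (∀ x ∈ l, x ∈ E) ∧ l.prod = m

/-- The pair `(a, b)` is geodesic with respect to `E`. -/
noncomputable def Geodesic {M : Type*} [Monoid M] (E : Set M) (a b : M) : Prop :=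
  wordLength E (a * b) = wordLength E a + wordLength E b

/-- A factorization map `η = (η̄, η′)` on `(M, E)`. -/
noncomputable def IsFactorizationMap {M : Type*} [Monoid M] (E : Set M)
    (η : M → M × M) : Prop :=
  (∀ m, (η m).1 * (η m).2 = m) ∧
  (∀ m, wordLength E m = wordLength E (η m).1 + wordLength E (η m).2) ∧
  (∀ m, m ≠ 1 → (η m).2 ∈ E) ∧
  η 1 = (1, 1)

/-- The map `f₁ : M³ → M³` applying `η` to the product of the two right entries,
with triples written `(x₃, x₂, x₁)`. -/
def f1 {M : Type*} [Monoid M] (η : M → M × M) (p : M × M × M) : M × M × M :=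
  (p.1, η (p.2.1 * p.2.2))

/-- The map `f₂ : M³ → M³` applying `η` to the product of the two left entries. -/
def f2 {M : Type*} [Monoid M] (η : M → M × M) (p : M × M × M) : M × M × M :=
  ((η (p.1 * p.2.1)).1, (η (p.1 * p.2.1)).2, p.2.2)

/-- The sum of the word lengths of the entries of a triple. -/
noncomputable def tnorm {M : Type*} [Monoid M] (E : Set M) (p : M × M × M) : ℕ :=
  wordLength E p.1 + wordLength E p.2.1 + wordLength E p.2.2

/-- `η` is a factorability structure on `(M, E)`: it is a factorization map and the
three maps `f₁f₂f₁f₂`, `f₂f₁f₂`, `f₂f₁f₂f₁ : M³ → M³` are equal in the graded sense. -/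
noncomputable def IsFactorable {M : Type*} [Monoid M] (E : Set M) (η : M → M × M) : Prop :=
  IsFactorizationMap E η ∧
  ∀ p : M × M × M,
    (f1 η (f2 η (f1 η (f2 η p))) = f2 η (f1 η (f2 η p)) ∧
     f2 η (f1 η (f2 η p)) = f2 η (f1 η (f2 η (f1 η p)))) ∨
    (tnorm E (f1 η (f2 η (f1 η (f2 η p)))) < tnorm E p ∧
     tnorm E (f2 η (f1 η (f2 η p))) < tnorm E p ∧
     tnorm E (f2 η (f1 η (f2 η (f1 η p)))) < tnorm E p)

/-- `η` is a weak factorability structure on `(M, E)`. -/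
noncomputable def IsWeaklyFactorable {M : Type*} [Monoid M] (E : Set M)
    (η : M → M × M) : Prop :=
  IsFactorizationMap E η ∧
  ∀ x : M, ∀ t ∈ E,
    Geodesic E (η x).2 t →
    Geodesic E (η x).1 (η ((η x).2 * t)).1 →
    Geodesic E x t ∧
    (η (x * t)).2 = (η ((η x).2 * t)).2 ∧
    (η (x * t)).1 = (η x).1 * (η ((η x).2 * t)).1

/-- `η` satisfies the recognition principle. -/
def RecognitionPrinciple {M : Type*} [Monoid M] (E : Set M) (η : M → M × M) : Prop :=
  ∀ m : M, ∀ a ∈ E, (η (m * a) = (m, a) ↔ η ((η m).2 * a) = ((η m).2, a))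


/-- `w` is a word of the free monoid `F_n` on the letters `{1, …, n}`. -/
def InF (n : ℕ) (w : List ℕ) : Prop := ∀ a ∈ w, 1 ≤ a ∧ a ≤ n

/-- The congruence on a free monoid of words generated by a relation `r`. -/
inductive CongClosure (r : List ℕ → List ℕ → Prop) : List ℕ → List ℕ → Prop
  | rel (u v : List ℕ) {x y : List ℕ} : r x y → CongClosure r (u ++ x ++ v) (u ++ y ++ v)
  | refl (x : List ℕ) : CongClosure r x x
  | symm {x y : List ℕ} : CongClosure r x y → CongClosure r y x
  | trans {x y z : List ℕ} : CongClosure r x y → CongClosure r y z → CongClosure r x z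

/-- The defining relations of `P_n`: `ab = ba` for `|a − b| ≥ 2`, and `aa = a`. -/
inductive PRel (n : ℕ) : List ℕ → List ℕ → Prop
  | comm (a b : ℕ) : 1 ≤ a → a ≤ n → 1 ≤ b → b ≤ n → (a + 2 ≤ b ∨ b + 2 ≤ a) →
      PRel n [a, b] [b, a]
  | idem (a : ℕ) : 1 ≤ a → a ≤ n → PRel n [a, a] [a]

/-- The congruence `∼_P` on `F_n`. -/
def PCong (n : ℕ) : List ℕ → List ℕ → Prop := CongClosure (PRel n)

/-- The defining relations of `Q_n`: those of `P_n` together with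
`k(k+1)k(k+1) = (k+1)k(k+1)` and `(k+1)k(k+1)k = (k+1)k(k+1)`. -/
inductive QRel (n : ℕ) : List ℕ → List ℕ → Prop
  | ofP {x y : List ℕ} : PRel n x y → QRel n x y
  | braid1 (k : ℕ) : 1 ≤ k → k + 1 ≤ n → QRel n [k, k + 1, k, k + 1] [k + 1, k, k + 1]
  | braid2 (k : ℕ) : 1 ≤ k → k + 1 ≤ n → QRel n [k + 1, k, k + 1, k] [k + 1, k, k + 1]

/-- The congruence `∼_Q` on `F_n`. -/
def QCong (n : ℕ) : List ℕ → List ℕ → Prop := CongClosure (QRel n)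

/-- The defining relations of `Q_n'`: those of `Q_n` together with the pairs `(kJ, J)`
for which there exists `I ∈ F_n` with `kIJ ∼_Q IJ`, `kI ∼_P Ik` and `k` not occurring
in `I`. -/
inductive RRel (n : ℕ) : List ℕ → List ℕ → Prop
  | ofQ {x y : List ℕ} : QRel n x y → RRel n x y
  | absorb (k : ℕ) (I J : List ℕ) : 1 ≤ k → k ≤ n → InF n I → InF n J →
      QCong n ((k :: I) ++ J) (I ++ J) → PCong n (k :: I) (I ++ [k]) → k ∉ I →
      RRel n (k :: J) J

/-- The congruence `∼` on `F_n`; the quotient monoid `F_n/∼` is `Q_n'`. -/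
def RCong (n : ℕ) : List ℕ → List ℕ → Prop := CongClosure (RRel n)

/-- The shift homomorphism `sh_k : F_{n−k} → F_n`, `i ↦ i + k`. -/
def sh (k : ℕ) (w : List ℕ) : List ℕ := w.map (· + k)

/-- The word `I_a^b = a·(a+1)⋯b`. -/
def Iseg (a b : ℕ) : List ℕ := List.range' a (b + 1 - a)

/-- The map `f_i : M^{n+1} → M^{n+1}` on tuples `(x_{n+1}, …, x_1)` (encoded as
functions `ℕ → M`, the entry `x_j` being the value at `j`): it replaces the pair
`(x_{i+1}, x_i)` by `(η̄(x_{i+1}·x_i), η′(x_{i+1}·x_i))`. -/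
def fApply {M : Type*} [Monoid M] (η : M → M × M) (i : ℕ) (v : ℕ → M) : ℕ → M :=
  fun j =>
    if j = i + 1 then (η (v (i + 1) * v i)).1
    else if j = i then (η (v (i + 1) * v i)).2
    else v j

/-- For a word `I = (i_s, …, i_1)` (a list with `i_s` first), the composition
`f_I = f_{i_s} ∘ ⋯ ∘ f_{i_1}`. -/
def fWord {M : Type*} [Monoid M] (η : M → M × M) (I : List ℕ) (v : ℕ → M) : ℕ → M :=
  I.foldr (fun i w => fApply η i w) v

/-!
The strong conditions pass from generators to products, so they hold for right multiplication by
every element of `M`. They then say that `f₂f₁f₂` sends a triple with product `y` to the triple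
`(η̄(η̄(y)), η′(η̄(y)), η′(y))`, which depends on `y` alone; since `f₁` preserves the product,
`f₂f₁f₂f₁ = f₂f₁f₂`. The remaining identity says that `f₁` fixes these normal triples. The normal
triple of `y` is the image of `(1, 1, y)` under `f₂f₁f₂` and has the same norm `N(y)`, so the graded
condition at `(1, 1, y)` cannot hold through a drop of the norm and must be an honest equality.
-/

section WordLength

variable {M : Type*} [Monoid M] {E : Set M}

theorem wordLength_prod_le {l : List M} (hl : ∀ x ∈ l, x ∈ E) :
    wordLength E l.prod ≤ l.length :=
  Nat.sInf_le ⟨l, hl, rfl, rfl⟩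

theorem wordLength_one : wordLength E (1 : M) = 0 :=
  Nat.le_zero.1 (wordLength_prod_le (E := E) (l := []) (by simp))

theorem IsGenSet.exists_list_length_eq_wordLength (hgen : IsGenSet E) (m : M) :
    ∃ l : List M, (∀ x ∈ l, x ∈ E) ∧ l.length = wordLength E m ∧ l.prod = m := by
  obtain ⟨l, hl, hm⟩ := hgen m
  exact Nat.sInf_mem
    (s := {n | ∃ l : List M, (∀ x ∈ l, x ∈ E) ∧ l.length = n ∧ l.prod = m})
    ⟨l.length, l, hl, rfl, hm⟩

theorem IsGenSet.wordLength_eq_zero_iff (hgen : IsGenSet E) {m : M} :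
    wordLength E m = 0 ↔ m = 1 := by
  refine ⟨fun hm => ?_, fun hm => hm ▸ wordLength_one⟩
  obtain ⟨l, -, hl, rfl⟩ := hgen.exists_list_length_eq_wordLength m
  rw [List.length_eq_zero_iff.1 (hl.trans hm), List.prod_nil]

theorem IsGenSet.wordLength_eq_one_of_mem (hgen : IsGenSet E) {s : M} (hs : s ∈ E)
    (hs1 : s ≠ 1) : wordLength E s = 1 := by
  have hle : wordLength E s ≤ 1 := by
    simpa using wordLength_prod_le (E := E) (l := [s]) (by simpa using hs)
  have hne : wordLength E s ≠ 0 := mt hgen.wordLength_eq_zero_iff.1 hs1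
  omega

end WordLength

section StrongConditions

variable {M : Type*} [Monoid M] {E : Set M} {η : M → M × M}

/-- The strong conditions `η̄(x·c) = η̄(x)·η̄(η′(x)·c)` and `η′(x·c) = η′(η′(x)·c)` for right
multiplication by a fixed element `c`, combined into one equation of pairs. -/
def IsStrongAt (η : M → M × M) (c : M) : Prop :=
  ∀ x, η (x * c) = ((η x).1 * (η ((η x).2 * c)).1, (η ((η x).2 * c)).2)

theorem IsStrongAt.mul {c d : M} (hc : IsStrongAt η c) (hd : IsStrongAt η d) :
    IsStrongAt η (c * d) := fun x => by
  rw [← mul_assoc, ← mul_assoc, hd (x * c), hd ((η x).2 * c), hc x, mul_assoc]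

theorem IsFactorizationMap.apply_of_mem (hη : IsFactorizationMap E η) (hgen : IsGenSet E)
    (h1 : (1 : M) ∉ E) {s : M} (hs : s ∈ E) : η s = (1, s) := by
  obtain ⟨hmul, hlen, hmem, -⟩ := hη
  have ne_one {t : M} (ht : t ∈ E) : t ≠ 1 := ne_of_mem_of_not_mem ht h1
  have hs' : (η s).2 ∈ E := hmem s (ne_one hs)
  have hlen_fst : wordLength E (η s).1 = 0 := by
    have h := hlen s
    rw [hgen.wordLength_eq_one_of_mem hs (ne_one hs),
      hgen.wordLength_eq_one_of_mem hs' (ne_one hs')] at h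
    omega
  have hfst : (η s).1 = 1 := hgen.wordLength_eq_zero_iff.1 hlen_fst
  have hsnd : (η s).2 = s := by simpa only [hfst, one_mul] using hmul s
  exact Prod.ext hfst hsnd

theorem IsFactorizationMap.isStrongAt_one (hη : IsFactorizationMap E η) (hgen : IsGenSet E)
    (h1 : (1 : M) ∉ E) : IsStrongAt η 1 := fun x => by
  have hsnd : η (η x).2 = (1, (η x).2) := by
    by_cases hx : x = 1
    · simp only [hx, hη.2.2.2]
    · exact hη.apply_of_mem hgen h1 (hη.2.2.1 x hx)
  simp only [mul_one, hsnd]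

theorem IsFactorizationMap.isStrongAt (hη : IsFactorizationMap E η) (hgen : IsGenSet E)
    (hstrong : ∀ s ∈ E, IsStrongAt η s) (c : M) : IsStrongAt η c := by
  have hone : IsStrongAt η 1 := by
    by_cases h1 : (1 : M) ∈ E
    · exact hstrong 1 h1
    · exact hη.isStrongAt_one hgen h1
  obtain ⟨l, hl, rfl⟩ := hgen c
  exact List.prod_induction (IsStrongAt η) (fun _ _ => IsStrongAt.mul) hone
    fun s hs => hstrong s (hl s hs)

end StrongConditions

section Triples

variable {M : Type*} [Monoid M] {E : Set M} {η : M → M × M}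

/-- The triple `(η̄(η̄(y)), η′(η̄(y)), η′(y))`, obtained by splitting off `η′` twice from the right
end of `y`. -/
def normalTriple (η : M → M × M) (y : M) : M × M × M :=
  ((η (η y).1).1, (η (η y).1).2, (η y).2)

/-- The honest identities `f₁f₂f₁f₂ = f₂f₁f₂ = f₂f₁f₂f₁` on `M³`. -/
def SatisfiesBraidIdentities (η : M → M × M) : Prop :=
  ∀ p : M × M × M,
    f1 η (f2 η (f1 η (f2 η p))) = f2 η (f1 η (f2 η p)) ∧
    f2 η (f1 η (f2 η p)) = f2 η (f1 η (f2 η (f1 η p)))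

theorem f2_f1_f2_one_one (hone : η 1 = (1, 1)) (y : M) :
    f2 η (f1 η (f2 η (1, 1, y))) = normalTriple η y := by
  simp only [f1, f2, normalTriple, hone, one_mul]

theorem f2_f1_f2_of_isStrongAt {a b c : M} (hc : IsStrongAt η c) :
    f2 η (f1 η (f2 η (a, b, c))) = normalTriple η (a * b * c) := by
  simp only [f1, f2, normalTriple, hc (a * b)]

theorem IsFactorizationMap.tnorm_normalTriple (hη : IsFactorizationMap E η) (y : M) :
    tnorm E (normalTriple η y) = wordLength E y := by
  rw [tnorm, normalTriple, ← hη.2.1, ← hη.2.1]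

theorem IsFactorable.f1_normalTriple (hfac : IsFactorable E η) (y : M) :
    f1 η (normalTriple η y) = normalTriple η y := by
  obtain ⟨hη, hgraded⟩ := hfac
  have h := hgraded (1, 1, y)
  rw [f2_f1_f2_one_one hη.2.2.2] at h
  rcases h with ⟨hfix, -⟩ | ⟨-, hlt, -⟩
  · exact hfix
  · have htnorm : tnorm E (1, 1, y) = wordLength E y := by
      simp only [tnorm, wordLength_one, zero_add]
    exact absurd hlt (by rw [hη.tnorm_normalTriple, htnorm]; exact lt_irrefl _)

theorem IsFactorable.satisfiesBraidIdentities (hfac : IsFactorable E η)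
    (hstrong : ∀ c, IsStrongAt η c) : SatisfiesBraidIdentities η := by
  rintro ⟨a, b, c⟩
  have hprod : a * (η (b * c)).1 * (η (b * c)).2 = a * b * c := by
    rw [mul_assoc, hfac.1.1, mul_assoc]
  constructor
  · rw [f2_f1_f2_of_isStrongAt (hstrong c), hfac.f1_normalTriple]
  · calc f2 η (f1 η (f2 η (a, b, c)))
        = normalTriple η (a * b * c) := f2_f1_f2_of_isStrongAt (hstrong c)
      _ = normalTriple η (a * (η (b * c)).1 * (η (b * c)).2) := by rw [hprod]
      _ = f2 η (f1 η (f2 η (f1 η (a, b, c)))) := (f2_f1_f2_of_isStrongAt (hstrong _)).symm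

end Triples

section Tuples

/-- The tuple `v` with its entries `(v_{k+2}, v_{k+1}, v_k)` replaced by the triple `p`. It embeds
`M³` into the tuples so that `f_k` and `f_{k+1}` restrict to `f₁` and `f₂`. -/
def replaceTriple {M : Type*} (v : ℕ → M) (k : ℕ) (p : M × M × M) : ℕ → M :=
  fun j => if j = k + 2 then p.1 else if j = k + 1 then p.2.1 else if j = k then p.2.2 else v j

theorem replaceTriple_self {M : Type*} (v : ℕ → M) (k : ℕ) :
    replaceTriple v k (v (k + 2), v (k + 1), v k) = v := by
  funext j
  unfold replaceTriple
  split_ifs <;> simp_all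

variable {M : Type*} [Monoid M] {η : M → M × M}

theorem fApply_replaceTriple (v : ℕ → M) (k : ℕ) (p : M × M × M) :
    fApply η k (replaceTriple v k p) = replaceTriple v k (f1 η p) := by
  funext j
  simp only [fApply, replaceTriple, f1]
  split_ifs <;> first | omega | simp_all

theorem fApply_succ_replaceTriple (v : ℕ → M) (k : ℕ) (p : M × M × M) :
    fApply η (k + 1) (replaceTriple v k p) = replaceTriple v k (f2 η p) := by
  funext j
  simp only [fApply, replaceTriple, f2]
  split_ifs <;> first | omega | simp_all

theorem fApply_comm {a b : ℕ} (hab : a + 2 ≤ b) (v : ℕ → M) :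
    fApply η a (fApply η b v) = fApply η b (fApply η a v) := by
  funext j
  simp only [fApply]
  split_ifs <;> first | omega | rfl

theorem fApply_idem (hmul : ∀ m, (η m).1 * (η m).2 = m) (a : ℕ) (v : ℕ → M) :
    fApply η a (fApply η a v) = fApply η a v := by
  funext j
  simp only [fApply, if_true, if_neg (Nat.ne_add_one a), hmul]
  split_ifs <;> rfl

theorem SatisfiesBraidIdentities.fApply_braid (hη : SatisfiesBraidIdentities η) (k : ℕ)
    (v : ℕ → M) :
    fApply η k (fApply η (k + 1) (fApply η k (fApply η (k + 1) v))) =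
        fApply η (k + 1) (fApply η k (fApply η (k + 1) v)) ∧
      fApply η (k + 1) (fApply η k (fApply η (k + 1) (fApply η k v))) =
        fApply η (k + 1) (fApply η k (fApply η (k + 1) v)) := by
  rw [← replaceTriple_self v k]
  simp only [fApply_replaceTriple, fApply_succ_replaceTriple, (hη _).1, ← (hη _).2, and_self]

end Tuples

section Words

variable {M : Type*} [Monoid M] {η : M → M × M}

theorem fWord_append (I J : List ℕ) (v : ℕ → M) :
    fWord η (I ++ J) v = fWord η I (fWord η J v) :=
  List.foldr_append

theorem fWord_eq_of_congClosure {r : List ℕ → List ℕ → Prop}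
    (hr : ∀ x y, r x y → fWord η x = fWord η y) {I J : List ℕ} (h : CongClosure r I J) :
    fWord η I = fWord η J := by
  induction h with
  | rel u w hxy => funext v; simp only [fWord_append, hr _ _ hxy]
  | refl x => rfl
  | symm _ ih => exact ih.symm
  | trans _ _ ih₁ ih₂ => exact ih₁.trans ih₂

theorem fWord_eq_of_pRel (hmul : ∀ m, (η m).1 * (η m).2 = m) {n : ℕ} {I J : List ℕ}
    (h : PRel n I J) : fWord η I = fWord η J := by
  funext v
  cases h with
  | comm a b _ _ _ _ hab =>
    rcases hab with hab | hba
    · exact fApply_comm hab v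
    · exact (fApply_comm hba v).symm
  | idem a => exact fApply_idem hmul a v

theorem fWord_eq_of_qRel (hmul : ∀ m, (η m).1 * (η m).2 = m) (hη : SatisfiesBraidIdentities η)
    {n : ℕ} {I J : List ℕ} (h : QRel n I J) : fWord η I = fWord η J := by
  cases h with
  | ofP h => exact fWord_eq_of_pRel hmul h
  | braid1 k => exact funext fun v => (hη.fApply_braid k v).1
  | braid2 k => exact funext fun v => (hη.fApply_braid k v).2

end Words

theorem evaluation_lemma_Q_general {M : Type*} [Monoid M] {E : Set M} (hgen : IsGenSet E)
    {η : M → M × M} (hfac : IsFactorable E η) (hstrong : ∀ s ∈ E, IsStrongAt η s) :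
    SatisfiesBraidIdentities η ∧
      ∀ (n : ℕ) (I J : List ℕ), QCong n I J → fWord η I = fWord η J := by
  have hbraid := hfac.satisfiesBraidIdentities (hfac.1.isStrongAt hgen hstrong)
  exact ⟨hbraid, fun _ _ _ => fWord_eq_of_congClosure fun _ _ => fWord_eq_of_qRel hfac.1.1 hbraid⟩

/-- Let `(M, E, η)` be a factorable monoid satisfying the stronger conditions
`η′(x·s) = η′(η′(x)·s)` and `η̄(x·s) = η̄(x)·η̄(η′(x)·s)` for all `x ∈ M`, `s ∈ E`. Then
`f₁f₂f₁f₂ = f₂f₁f₂ = f₂f₁f₂f₁` as maps `M³ → M³` (honest equality), and for words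
`I ∼_Q J` in `F_n` and every tuple of generators `(x_{n+1}, …, x_1) ∈ E^{n+1}` one has
`f_I(x_{n+1}, …, x_1) = f_J(x_{n+1}, …, x_1)`. -/
theorem evaluation_lemma_Q
    {M : Type*} [Monoid M] (E : Set M) (h1 : (1 : M) ∉ E) (hgen : IsGenSet E)
    (η : M → M × M) (hfac : IsFactorable E η)
    (hstrong : ∀ x : M, ∀ s ∈ E,
      (η (x * s)).2 = (η ((η x).2 * s)).2 ∧
      (η (x * s)).1 = (η x).1 * (η ((η x).2 * s)).1) :
    (∀ p : M × M × M,
      f1 η (f2 η (f1 η (f2 η p))) = f2 η (f1 η (f2 η p)) ∧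
      f2 η (f1 η (f2 η p)) = f2 η (f1 η (f2 η (f1 η p)))) ∧
    (∀ (n : ℕ) (I J : List ℕ), InF n I → InF n J → QCong n I J →
      ∀ v : ℕ → M, (∀ j, 1 ≤ j → j ≤ n + 1 → v j ∈ E) →
        fWord η I v = fWord η J v) := by
  obtain ⟨hbraid, hword⟩ := evaluation_lemma_Q_general hgen hfac
    fun s hs x => Prod.ext (hstrong x s hs).2 (hstrong x s hs).1
  exact ⟨hbraid, fun n I J _ _ hIJ v _ => congrFun (hword n I J hIJ) v⟩
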